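/- arXiv:2105.03397 — 5 statements merged into one kernel-verified Lean document; each statement's English description precedes it below -/
import Mathlib

section
/- Let φ, μ, σ : ℝ → ℝ, let β ≥ 0, and let a < 0 < b be real numbers. Assume |φ(x) − μ(x)| ≤ β σ(x) for all x ∈ [a,b]. Let κ̂₁ ∈ ℝ be any lower bound of the set S⁻ = { min{x·(μ(x) − β σ(x)), x·(μ(x) + β σ(x))}/x² : x ∈ [a,b], x ≠ 0 } and let κ̂₂ ∈ ℝ be any upper bound of the set S⁺ = { max{x·(μ(x) − β σ(x)), x·(μ(x) + β σ(x))}/x² : x ∈ [a,b], x ≠ 0 }. Then φ belongs to the sector [κ̂₁, κ̂₂] on [a,b] \ {0}. -/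
/-- A function `φ` belongs to the sector `[κ₁, κ₂]` on a set `S ⊆ ℝ` if
`κ₁ x² ≤ x φ(x) ≤ κ₂ x²` for all `x ∈ S`. -/
def InSector (φ : ℝ → ℝ) (κ₁ κ₂ : ℝ) (S : Set ℝ) : Prop :=
  ∀ x ∈ S, κ₁ * x ^ 2 ≤ x * φ x ∧ x * φ x ≤ κ₂ * x ^ 2

open Set

theorem mul_mem_uIcc_of_mem_uIcc {R : Type*} [Ring R] [LinearOrder R] [IsOrderedRing R]
    {y l u : R} (x : R) (hy : y ∈ uIcc l u) : x * y ∈ uIcc (x * l) (x * u) := by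
  rcases le_total 0 x with hx | hx
  · exact (monotone_mul_left_of_nonneg hx).mapsTo_uIcc hy
  · exact (antitone_mul_left hx).mapsTo_uIcc hy

theorem mem_uIcc_of_abs_sub_le {G : Type*} [AddCommGroup G] [LinearOrder G]
    [IsOrderedAddMonoid G] {y c r : G} (h : |y - c| ≤ r) : y ∈ uIcc (c - r) (c + r) :=
  Icc_subset_uIcc <| mem_Icc_iff_abs_le.mp <| abs_sub_comm y c ▸ h

theorem InSector.mono {φ : ℝ → ℝ} {κ₁ κ₂ : ℝ} {S T : Set ℝ} (h : InSector φ κ₁ κ₂ T)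
    (hST : S ⊆ T) : InSector φ κ₁ κ₂ S :=
  fun x hx ↦ h x (hST hx)

theorem inSector_iff_forall_div_sq_mem_Icc {φ : ℝ → ℝ} {κ₁ κ₂ : ℝ} {S : Set ℝ} :
    InSector φ κ₁ κ₂ S ↔ ∀ x ∈ S \ {0}, x * φ x / x ^ 2 ∈ Icc κ₁ κ₂ := by
  have div_mem_Icc_iff {x : ℝ} (hx : x ≠ 0) : x * φ x / x ^ 2 ∈ Icc κ₁ κ₂ ↔
      κ₁ * x ^ 2 ≤ x * φ x ∧ x * φ x ≤ κ₂ * x ^ 2 := by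
    have hsq : 0 < x ^ 2 := by positivity
    rw [mem_Icc, le_div_iff₀ hsq, div_le_iff₀ hsq]
  constructor
  · exact fun h x hx ↦ (div_mem_Icc_iff hx.2).mpr (h x hx.1)
  · intro h x hx
    obtain rfl | hx₀ := eq_or_ne x 0
    · simp
    · exact (div_mem_Icc_iff hx₀).mp (h x ⟨hx, hx₀⟩)

theorem sector_bounds_from_uncertainty_set_general {φ l u : ℝ → ℝ} {S : Set ℝ} {κ₁ κ₂ : ℝ}
    (hφ : ∀ x ∈ S \ {0}, φ x ∈ uIcc (l x) (u x))
    (hκ₁ : ∀ x ∈ S \ {0}, κ₁ ≤ min (x * l x) (x * u x) / x ^ 2)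
    (hκ₂ : ∀ x ∈ S \ {0}, max (x * l x) (x * u x) / x ^ 2 ≤ κ₂) :
    InSector φ κ₁ κ₂ S := by
  refine inSector_iff_forall_div_sq_mem_Icc.mpr fun x hx ↦ ?_
  obtain ⟨hmin, hmax⟩ := mul_mem_uIcc_of_mem_uIcc x (hφ x hx)
  constructor
  · calc κ₁ ≤ min (x * l x) (x * u x) / x ^ 2 := hκ₁ x hx
      _ ≤ x * φ x / x ^ 2 := by gcongr
  · calc x * φ x / x ^ 2 ≤ max (x * l x) (x * u x) / x ^ 2 := by gcongr
      _ ≤ κ₂ := hκ₂ x hx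

theorem sector_bounds_from_uncertainty_set
    (φ μ σ : ℝ → ℝ) (β : ℝ) (hβ : 0 ≤ β) (a b : ℝ) (ha : a < 0) (hb : 0 < b)
    (hunc : ∀ x ∈ Set.Icc a b, |φ x - μ x| ≤ β * σ x)
    (κhat₁ κhat₂ : ℝ)
    (hκhat₁ : ∀ r ∈ {r : ℝ | ∃ x ∈ Set.Icc a b, x ≠ 0 ∧
        r = min (x * (μ x - β * σ x)) (x * (μ x + β * σ x)) / x ^ 2}, κhat₁ ≤ r)
    (hκhat₂ : ∀ r ∈ {r : ℝ | ∃ x ∈ Set.Icc a b, x ≠ 0 ∧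
        r = max (x * (μ x - β * σ x)) (x * (μ x + β * σ x)) / x ^ 2}, r ≤ κhat₂) :
    InSector φ κhat₁ κhat₂ (Set.Icc a b \ {0}) :=
  (sector_bounds_from_uncertainty_set_general (fun x hx ↦ mem_uIcc_of_abs_sub_le (hunc x hx.1))
    (fun x hx ↦ hκhat₁ _ ⟨x, hx.1, hx.2, rfl⟩)
    (fun x hx ↦ hκhat₂ _ ⟨x, hx.1, hx.2, rfl⟩)).mono sdiff_subset
end

section
/- Let φ, μ, σ : ℝ → ℝ, let β ≥ 0, and let a < 0 < b be real numbers. Assume |φ(x) − μ(x)| ≤ β σ(x) for all x ∈ [a,b]. Define S⁻ = { min{x·(μ(x) − β σ(x)), x·(μ(x) + β σ(x))}/x² : x ∈ [a,b], x ≠ 0 } and S⁺ = { max{x·(μ(x) − β σ(x)), x·(μ(x) + β σ(x))}/x² : x ∈ [a,b], x ≠ 0 }, and assume S⁻ is bounded below and S⁺ is bounded above. Set κ̂₁ = inf S⁻ and κ̂₂ = sup S⁺, and let κ₁ = inf { x φ(x)/x² : x ∈ [a,b], x ≠ 0 } and κ₂ = sup { x φ(x)/x² : x ∈ [a,b], x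 ≠ 0 } be the tightest sector bounds of φ on [a,b] \ {0}. Then [κ̂₁, κ̂₂] is an overapproximation of [κ₁, κ₂], i.e. κ̂₁ ≤ κ₁ and κ̂₂ ≥ κ₂. -/
/-
A point of the unordered interval between `l` and `u` is carried by multiplication by `x`, whatever
the sign of `x`, to a point of the unordered interval between `x * l` and `x * u`. Dividing by
`x ^ 2` encloses every sector ratio of `φ` between the two envelope ratios at the same `x`, and the
comparison passes to infima and suprema.
-/

open Set

section ConditionallyCompleteLattice

variable {α : Type*} [ConditionallyCompleteLattice α] {s t : Set α}

lemma csInf_le_csInf_of_isCoinitialFor (hs : BddBelow s) (ht : t.Nonempty)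
    (h : IsCoinitialFor t s) : sInf s ≤ sInf t :=
  le_csInf ht fun _ hb ↦
    let ⟨_, ha, hab⟩ := h hb
    csInf_le_of_le hs ha hab

lemma csSup_le_csSup_of_isCofinalFor (hs : s.Nonempty) (ht : BddAbove t)
    (h : IsCofinalFor s t) : sSup s ≤ sSup t :=
  csSup_le hs fun _ ha ↦
    let ⟨_, hb, hab⟩ := h ha
    le_csSup_of_le ht hb hab

end ConditionallyCompleteLattice

section LinearOrderedField

variable {K : Type*} [Field K] [LinearOrder K] [IsStrictOrderedRing K] {l u y : K}

lemma mul_mem_uIcc_mul_left (x : K) (hy : y ∈ uIcc l u) : x * y ∈ uIcc (x * l) (x * u) :=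
  image_const_mul_uIcc x l u ▸ mem_image_of_mem (x * ·) hy

lemma mul_div_sq_mem_Icc_of_mem_uIcc (x : K) (hy : y ∈ uIcc l u) :
    x * y / x ^ 2 ∈
      Icc (min (x * l) (x * u) / x ^ 2) (max (x * l) (x * u) / x ^ 2) :=
  have hxy := mul_mem_uIcc_mul_left x hy
  ⟨div_le_div_of_nonneg_right hxy.1 (sq_nonneg x), div_le_div_of_nonneg_right hxy.2 (sq_nonneg x)⟩

end LinearOrderedField

theorem sector_bounds_overapproximation_general {φ l u : ℝ → ℝ} {D : Set ℝ}
    (hD : ∃ x ∈ D, x ≠ 0) (hφ : ∀ x ∈ D, x ≠ 0 → φ x ∈ uIcc (l x) (u x))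
    (hl : BddBelow {r : ℝ | ∃ x ∈ D, x ≠ 0 ∧ r = min (x * l x) (x * u x) / x ^ 2})
    (hu : BddAbove {r : ℝ | ∃ x ∈ D, x ≠ 0 ∧ r = max (x * l x) (x * u x) / x ^ 2}) :
    sInf {r : ℝ | ∃ x ∈ D, x ≠ 0 ∧ r = min (x * l x) (x * u x) / x ^ 2} ≤
        sInf {r : ℝ | ∃ x ∈ D, x ≠ 0 ∧ r = x * φ x / x ^ 2} ∧
      sSup {r : ℝ | ∃ x ∈ D, x ≠ 0 ∧ r = x * φ x / x ^ 2} ≤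
        sSup {r : ℝ | ∃ x ∈ D, x ≠ 0 ∧ r = max (x * l x) (x * u x) / x ^ 2} := by
  have ratios_nonempty : {r : ℝ | ∃ x ∈ D, x ≠ 0 ∧ r = x * φ x / x ^ 2}.Nonempty :=
    let ⟨x, hx, hx0⟩ := hD
    ⟨_, x, hx, hx0, rfl⟩
  constructor
  · refine csInf_le_csInf_of_isCoinitialFor hl ratios_nonempty ?_
    rintro _ ⟨x, hx, hx0, rfl⟩
    exact ⟨_, ⟨x, hx, hx0, rfl⟩, (mul_div_sq_mem_Icc_of_mem_uIcc x (hφ x hx hx0)).1⟩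
  · refine csSup_le_csSup_of_isCofinalFor ratios_nonempty hu ?_
    rintro _ ⟨x, hx, hx0, rfl⟩
    exact ⟨_, ⟨x, hx, hx0, rfl⟩, (mul_div_sq_mem_Icc_of_mem_uIcc x (hφ x hx hx0)).2⟩

theorem sector_bounds_overapproximation
    (φ μ σ : ℝ → ℝ) (β : ℝ) (hβ : 0 ≤ β) (a b : ℝ) (ha : a < 0) (hb : 0 < b)
    (hunc : ∀ x ∈ Set.Icc a b, |φ x - μ x| ≤ β * σ x)
    (Sminus Splus Sphi : Set ℝ)
    (hSminus : Sminus = {r : ℝ | ∃ x ∈ Set.Icc a b, x ≠ 0 ∧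
        r = min (x * (μ x - β * σ x)) (x * (μ x + β * σ x)) / x ^ 2})
    (hSplus : Splus = {r : ℝ | ∃ x ∈ Set.Icc a b, x ≠ 0 ∧
        r = max (x * (μ x - β * σ x)) (x * (μ x + β * σ x)) / x ^ 2})
    (hSphi : Sphi = {r : ℝ | ∃ x ∈ Set.Icc a b, x ≠ 0 ∧ r = x * φ x / x ^ 2})
    (hbddminus : BddBelow Sminus) (hbddplus : BddAbove Splus) :
    sInf Sminus ≤ sInf Sphi ∧ sSup Sphi ≤ sSup Splus := by
  subst hSminus hSplus hSphi
  exact sector_bounds_overapproximation_general ⟨b, right_mem_Icc.2 (ha.trans hb).le, hb.ne'⟩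
    (fun x hx _ ↦ Icc_subset_uIcc (mem_Icc_iff_abs_le.1 (abs_sub_comm (φ x) (μ x) ▸ hunc x hx)))
    hbddminus hbddplus
end

section
/- Let n ≥ 1, let P be a symmetric real 2n × 2n matrix with [0; Iₙ]ᵀ P [0; Iₙ] ⪯ 0 (negative semidefinite), and let κ₁, κ₂ ∈ ℝⁿ with κ₁ᵢ ≤ κ₂ᵢ for all i. Suppose that for every vertex θ of the box, i.e. every θ ∈ ℝⁿ with θᵢ ∈ {κ₁ᵢ, κ₂ᵢ} for all i, the matrix [Iₙ; Θ(θ)]ᵀ P [Iₙ; Θ(θ)] is positive semidefinite. Then for every θ ∈ ℝⁿ with κ₁ᵢ ≤ θᵢ ≤ κ₂ᵢ for all i, the matrix [Iₙ; Θ(θ)]ᵀ P [Iₙ; Θ(θ)] is positive semidefinite. -/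
open Matrix

/-- The `2n × n` matrix `[0; Iₙ]` obtained by stacking the zero matrix on top of `Iₙ`. -/
def stackZeroId (n : ℕ) : Matrix (Fin n ⊕ Fin n) (Fin n) ℝ :=
  Matrix.fromRows 0 1

/-- The `2n × n` matrix `[Iₙ; Θ(θ)]` obtained by stacking `Iₙ` on top of the diagonal
matrix `Θ(θ)` with diagonal entries `θ₁, …, θₙ`. -/
def stackIdDiag {n : ℕ} (θ : Fin n → ℝ) : Matrix (Fin n ⊕ Fin n) (Fin n) ℝ :=
  Matrix.fromRows 1 (Matrix.diagonal θ)

/-!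
At `aX + bY` with `a + b = 1`, the quadratic map `X ↦ [A; X]ᴴ P [A; X]` exceeds its chord by
`-ab (X - Y)ᴴ P₂₂ (X - Y)`, because the fixed block `A` cancels in the difference of two stacks.
Hence it is concave for the Loewner order as soon as `P₂₂ ⪯ 0`, its nonnegativity set is convex,
and the box is the convex hull of its vertices.
-/

section BlockQuadratic

variable {S R m k n : Type*}

theorem fromRows_smul_add_smul [Semiring S] [AddCommMonoid R] [Module S R] (A : Matrix m n R)
    (X Y : Matrix k n R) {a b : S} (hab : a + b = 1) :
    fromRows A (a • X + b • Y) = a • fromRows A X + b • fromRows A Y := by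
  ext (i | i) j
  · simp [← add_smul, hab]
  · simp

theorem fromRows_sub_fromRows_left [AddGroup R] (A : Matrix m n R) (X Y : Matrix k n R) :
    fromRows A X - fromRows A Y = fromRows 0 (X - Y) := by
  ext (i | i) j <;> simp

variable [Fintype m]

theorem conjTranspose_mul_mul_smul_add_smul [CommRing S] [StarRing S] [TrivialStar S]
    [Ring R] [StarRing R] [Algebra S R] [StarModule S R] (P : Matrix m m R) (X Y : Matrix m n R)
    {a b : S} (hab : a + b = 1) :
    (a • X + b • Y)ᴴ * P * (a • X + b • Y) =
      a • (Xᴴ * P * X) + b • (Yᴴ * P * Y) - (a * b) • ((X - Y)ᴴ * P * (X - Y)) := by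
  obtain rfl : b = 1 - a := eq_sub_of_add_eq' hab
  simp only [conjTranspose_add, conjTranspose_sub, conjTranspose_smul, star_trivial,
    Matrix.add_mul, Matrix.mul_add, Matrix.sub_mul, Matrix.mul_sub, Matrix.smul_mul,
    Matrix.mul_smul]
  module

variable [Fintype k]

theorem conjTranspose_fromRows_zero_mul_mul [Ring R] [StarRing R]
    (P : Matrix (m ⊕ k) (m ⊕ k) R) (X : Matrix k n R) :
    (fromRows (0 : Matrix m n R) X)ᴴ * P * fromRows (0 : Matrix m n R) X =
      Xᴴ * P.toBlocks₂₂ * X := by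
  conv_lhs => rw [← fromBlocks_toBlocks P, Matrix.mul_assoc, fromBlocks_mul_fromRows,
    conjTranspose_fromRows_eq_fromCols_conjTranspose, fromCols_mul_fromRows]
  simp [Matrix.mul_assoc]

/-- The value `[A; X]ᴴ P [A; X]` at `X` of the quadratic matrix function with multiplier `P`. The
block `A`, which is the identity in the classical setting, is arbitrary. -/
def multiplierForm [Ring R] [StarRing R] (P : Matrix (m ⊕ k) (m ⊕ k) R) (A : Matrix m n R)
    (X : Matrix k n R) : Matrix n n R :=
  (fromRows A X)ᴴ * P * fromRows A X

theorem multiplierForm_smul_add_smul [CommRing S] [StarRing S] [TrivialStar S] [Ring R]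
    [StarRing R] [Algebra S R] [StarModule S R] (P : Matrix (m ⊕ k) (m ⊕ k) R) (A : Matrix m n R)
    (X Y : Matrix k n R) {a b : S} (hab : a + b = 1) :
    multiplierForm P A (a • X + b • Y) =
      a • multiplierForm P A X + b • multiplierForm P A Y -
        (a * b) • ((X - Y)ᴴ * P.toBlocks₂₂ * (X - Y)) := by
  simp only [multiplierForm]
  rw [fromRows_smul_add_smul A X Y hab, conjTranspose_mul_mul_smul_add_smul P _ _ hab,
    fromRows_sub_fromRows_left, conjTranspose_fromRows_zero_mul_mul]

end BlockQuadratic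

section Concavity

open scoped ComplexOrder MatrixOrder

variable {𝕜 m k n : Type*} [RCLike 𝕜] [Fintype m] [Fintype k] [Finite n]

theorem concaveOn_multiplierForm {P : Matrix (m ⊕ k) (m ⊕ k) 𝕜}
    (hP : (-P.toBlocks₂₂).PosSemidef) (A : Matrix m n 𝕜) :
    ConcaveOn ℝ Set.univ (multiplierForm P A) := by
  refine ⟨convex_univ, fun X _ Y _ a b ha hb hab => ?_⟩
  have chord_gap : (-((X - Y)ᴴ * P.toBlocks₂₂ * (X - Y))).PosSemidef := by
    simpa using hP.conjTranspose_mul_mul_same (X - Y)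
  rw [multiplierForm_smul_add_smul P A X Y hab, sub_eq_add_neg, ← smul_neg]
  exact le_add_of_nonneg_right (chord_gap.smul (mul_nonneg ha hb)).nonneg

theorem convex_setOf_multiplierForm_posSemidef {P : Matrix (m ⊕ k) (m ⊕ k) 𝕜}
    (hP : (-P.toBlocks₂₂).PosSemidef) (A : Matrix m n 𝕜) :
    Convex ℝ {X | (multiplierForm P A X).PosSemidef} := by
  cases nonempty_fintype n
  simpa [nonneg_iff_posSemidef] using (concaveOn_multiplierForm hP A).convex_ge 0

end Concavity

theorem Icc_eq_convexHull_pi_pair {𝕜 ι : Type*} [Field 𝕜] [LinearOrder 𝕜]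
    [IsStrictOrderedRing 𝕜] [Finite ι] {a b : ι → 𝕜} (hab : a ≤ b) :
    Set.Icc a b = convexHull 𝕜 (Set.univ.pi fun i => {a i, b i}) := by
  simp only [convexHull_pi, convexHull_pair, segment_eq_Icc (hab _), Set.pi_univ_Icc]

open scoped ComplexOrder in
theorem multiplier_psd_on_box_of_psd_on_vertices_general {𝕜 m ι : Type*} [RCLike 𝕜] [Fintype m]
    [Fintype ι] [DecidableEq ι] {P : Matrix (m ⊕ ι) (m ⊕ ι) 𝕜}
    (hP : (-P.toBlocks₂₂).PosSemidef) (A : Matrix m ι 𝕜) {κ₁ κ₂ : ι → ℝ}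
    (hvert : ∀ θ : ι → ℝ, (∀ i, θ i = κ₁ i ∨ θ i = κ₂ i) →
      (multiplierForm P A (diagonal fun i => (θ i : 𝕜))).PosSemidef)
    {θ : ι → ℝ} (hθ : θ ∈ Set.Icc κ₁ κ₂) :
    (multiplierForm P A (diagonal fun i => (θ i : 𝕜))).PosSemidef := by
  let diag : (ι → ℝ) →ₗ[ℝ] Matrix ι ι 𝕜 :=
    diagonalLinearMap ι ℝ 𝕜 ∘ₗ (Algebra.linearMap ℝ 𝕜).compLeft ι
  have hconv : Convex ℝ (diag ⁻¹' {X | (multiplierForm P A X).PosSemidef}) :=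
    (convex_setOf_multiplierForm_posSemidef hP A).linear_preimage diag
  rw [Icc_eq_convexHull_pi_pair (hθ.1.trans hθ.2)] at hθ
  exact convexHull_min (fun v hv => hvert v fun i => Set.mem_univ_pi.mp hv i) hconv hθ

theorem transpose_stackZeroId_mul_mul_stackZeroId {n : ℕ}
    (P : Matrix (Fin n ⊕ Fin n) (Fin n ⊕ Fin n) ℝ) :
    (stackZeroId n)ᵀ * P * stackZeroId n = P.toBlocks₂₂ := by
  simpa [stackZeroId] using conjTranspose_fromRows_zero_mul_mul P (1 : Matrix (Fin n) (Fin n) ℝ)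

theorem multiplierForm_one_diagonal {n : ℕ} (P : Matrix (Fin n ⊕ Fin n) (Fin n ⊕ Fin n) ℝ)
    (θ : Fin n → ℝ) :
    multiplierForm P 1 (diagonal θ) = (stackIdDiag θ)ᵀ * P * stackIdDiag θ := by
  rw [multiplierForm, conjTranspose_eq_transpose_of_trivial, stackIdDiag]

theorem multiplier_psd_on_box_of_psd_on_vertices
    (n : ℕ) (hn : 1 ≤ n)
    (P : Matrix (Fin n ⊕ Fin n) (Fin n ⊕ Fin n) ℝ) (hP : P.IsSymm)
    (hP22 : (-((stackZeroId n)ᵀ * P * stackZeroId n)).PosSemidef)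
    (κ₁ κ₂ : Fin n → ℝ) (hκ : ∀ i, κ₁ i ≤ κ₂ i)
    (hvert : ∀ θ : Fin n → ℝ, (∀ i, θ i = κ₁ i ∨ θ i = κ₂ i) →
      ((stackIdDiag θ)ᵀ * P * stackIdDiag θ).PosSemidef) :
    ∀ θ : Fin n → ℝ, (∀ i, κ₁ i ≤ θ i ∧ θ i ≤ κ₂ i) →
      ((stackIdDiag θ)ᵀ * P * stackIdDiag θ).PosSemidef := by
  simp only [transpose_stackZeroId_mul_mul_stackZeroId, ← multiplierForm_one_diagonal]
    at hP22 hvert ⊢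
  exact fun θ hθ => multiplier_psd_on_box_of_psd_on_vertices_general hP22 1 hvert
    ⟨fun i => (hθ i).1, fun i => (hθ i).2⟩
end

section
/- Let n ≥ 1, let P be a symmetric real 2n × 2n matrix with [0; Iₙ]ᵀ P [0; Iₙ] ⪯ 0 (negative semidefinite), and let κ₁, κ₂ ∈ ℝⁿ with κ₁ᵢ ≤ κ₂ᵢ for all i. Suppose that for every θ ∈ ℝⁿ with θᵢ ∈ {κ₁ᵢ, κ₂ᵢ} for all i, the matrix [Iₙ; Θ(θ)]ᵀ P [Iₙ; Θ(θ)] is positive semidefinite. Let φ₁, …, φₙ : ℝ → ℝ satisfy φᵢ(0) = 0 and let φᵢ belong to the sector [κ₁ᵢ, κ₂ᵢ] on ℝ for each i. Then for every q ∈ ℝⁿ, letting p ∈ ℝⁿ be defined by pᵢ = φᵢ(qᵢ), we have (q; p)ᵀ P (q; p) ≥ 0. -/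
open Matrix

/-!
For fixed `q`, the form `p ↦ (q; p)ᵀ P (q; p)` is concave, because its quadratic part is the
negative semidefinite lower right block of `P`. The sector bounds place `p` in the box with
vertices `(θᵢ qᵢ)ᵢ`, `θᵢ ∈ {κ₁ᵢ, κ₂ᵢ}`, and a concave function on a box is bounded below by its
smallest value at a vertex.
-/

section QuadraticForms

variable {m n R : Type*} [Fintype m] [Fintype n]

theorem dotProduct_transpose_mul_mul_mulVec [CommSemiring R] (A : Matrix m n R)
    (P : Matrix m m R) (x : n → R) :
    x ⬝ᵥ (Aᵀ * P * A) *ᵥ x = (A *ᵥ x) ⬝ᵥ P *ᵥ (A *ᵥ x) := by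
  rw [← mulVec_mulVec, ← mulVec_mulVec, dotProduct_mulVec, vecMul_transpose]

theorem dotProduct_mulVec_affineCombination [CommRing R] (P : Matrix m m R) (u v : m → R)
    {a b : R} (hab : a + b = 1) :
    (a • u + b • v) ⬝ᵥ P *ᵥ (a • u + b • v) =
      a * (u ⬝ᵥ P *ᵥ u) + b * (v ⬝ᵥ P *ᵥ v) - a * b * ((u - v) ⬝ᵥ P *ᵥ (u - v)) := by
  obtain rfl : b = 1 - a := eq_sub_of_add_eq' hab
  simp only [mulVec_add, mulVec_sub, mulVec_smul, add_dotProduct, sub_dotProduct,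
    dotProduct_add, dotProduct_sub, smul_dotProduct, dotProduct_smul, smul_eq_mul]
  ring

theorem concaveOn_dotProduct_mulVec_sumElim [CommRing R] [PartialOrder R] [IsOrderedRing R]
    (P : Matrix (m ⊕ n) (m ⊕ n) R)
    (hP : ∀ v : n → R, (0 ⊕ᵥ v) ⬝ᵥ P *ᵥ (0 ⊕ᵥ v) ≤ 0) (q : m → R) :
    ConcaveOn R Set.univ fun p : n → R ↦ (q ⊕ᵥ p) ⬝ᵥ P *ᵥ (q ⊕ᵥ p) := by
  refine ⟨convex_univ, fun x _ y _ a b ha hb hab ↦ ?_⟩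
  have hcomb : q ⊕ᵥ (a • x + b • y) = a • (q ⊕ᵥ x) + b • (q ⊕ᵥ y) := by
    ext (i | i)
    · simp [← add_mul, hab]
    · simp
  have hsub : (q ⊕ᵥ x) - (q ⊕ᵥ y) = (0 : m → R) ⊕ᵥ (x - y) := by
    ext (i | i) <;> simp
  have hcross : a * b * ((0 ⊕ᵥ (x - y)) ⬝ᵥ P *ᵥ (0 ⊕ᵥ (x - y))) ≤ 0 :=
    mul_nonpos_of_nonneg_of_nonpos (mul_nonneg ha hb) (hP (x - y))
  beta_reduce
  rw [hcomb, dotProduct_mulVec_affineCombination P _ _ hab, hsub]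
  exact (le_sub_self_iff _).mpr hcross

end QuadraticForms

theorem exists_eq_mul_of_mem_pi_pair {ι M : Type*} [Mul M] {κ₁ κ₂ q v : ι → M}
    (hv : v ∈ Set.univ.pi fun i ↦ ({κ₁ i * q i, κ₂ i * q i} : Set M)) :
    ∃ θ : ι → M, (∀ i, θ i = κ₁ i ∨ θ i = κ₂ i) ∧ v = θ * q := by
  have hcoord (i : ι) : ∃ t, (t = κ₁ i ∨ t = κ₂ i) ∧ v i = t * q i := by
    rcases hv i (Set.mem_univ i) with h | h
    exacts [⟨κ₁ i, .inl rfl, h⟩, ⟨κ₂ i, .inr rfl, h⟩]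
  choose θ hθ hvθ using hcoord
  exact ⟨θ, hθ, funext hvθ⟩

section Sector

variable {ι 𝕜 : Type*} [Field 𝕜] [LinearOrder 𝕜] [IsStrictOrderedRing 𝕜]

theorem mem_segment_of_sector {κ₁ κ₂ x y : 𝕜} (h0 : x = 0 → y = 0)
    (hsector : κ₁ * x ^ 2 ≤ x * y ∧ x * y ≤ κ₂ * x ^ 2) :
    y ∈ segment 𝕜 (κ₁ * x) (κ₂ * x) := by
  have hfactor (κ : 𝕜) : κ * x ^ 2 = x * (κ * x) := by ring
  rw [hfactor, hfactor] at hsector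
  rw [segment_eq_uIcc, Set.mem_uIcc]
  rcases lt_trichotomy x 0 with hneg | hzero | hpos
  · rw [mul_le_mul_left_of_neg hneg, mul_le_mul_left_of_neg hneg] at hsector
    exact .inr hsector.symm
  · simp [hzero, h0 hzero]
  · rw [mul_le_mul_iff_right₀ hpos, mul_le_mul_iff_right₀ hpos] at hsector
    exact .inl hsector

theorem mem_convexHull_pi_pair_of_sector [Finite ι] {κ₁ κ₂ q p : ι → 𝕜}
    (h0 : ∀ i, q i = 0 → p i = 0)
    (hsector : ∀ i, κ₁ i * q i ^ 2 ≤ q i * p i ∧ q i * p i ≤ κ₂ i * q i ^ 2) :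
    p ∈ convexHull 𝕜 (Set.univ.pi fun i ↦ {κ₁ i * q i, κ₂ i * q i}) := by
  simp only [convexHull_pi, convexHull_pair]
  exact fun i _ ↦ mem_segment_of_sector (h0 i) (hsector i)

theorem pointwise_quadratic_constraint_of_sector_general [Fintype ι]
    (P : Matrix (ι ⊕ ι) (ι ⊕ ι) 𝕜)
    (hP22 : ∀ v : ι → 𝕜, (0 ⊕ᵥ v) ⬝ᵥ P *ᵥ (0 ⊕ᵥ v) ≤ 0) {κ₁ κ₂ q p : ι → 𝕜}
    (hvert : ∀ θ : ι → 𝕜, (∀ i, θ i = κ₁ i ∨ θ i = κ₂ i) →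
      0 ≤ (q ⊕ᵥ (θ * q)) ⬝ᵥ P *ᵥ (q ⊕ᵥ (θ * q)))
    (h0 : ∀ i, q i = 0 → p i = 0)
    (hsector : ∀ i, κ₁ i * q i ^ 2 ≤ q i * p i ∧ q i * p i ≤ κ₂ i * q i ^ 2) :
    0 ≤ (q ⊕ᵥ p) ⬝ᵥ P *ᵥ (q ⊕ᵥ p) := by
  obtain ⟨v, hv, hvp⟩ :=
    (concaveOn_dotProduct_mulVec_sumElim P hP22 q).exists_le_of_mem_convexHull
      (Set.subset_univ _) (mem_convexHull_pi_pair_of_sector h0 hsector)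
  obtain ⟨θ, hθ, rfl⟩ := exists_eq_mul_of_mem_pi_pair hv
  exact (hvert θ hθ).trans hvp

end Sector

section StackedMatrices

variable {n : ℕ} {P : Matrix (Fin n ⊕ Fin n) (Fin n ⊕ Fin n) ℝ}

theorem stackZeroId_mulVec (x : Fin n → ℝ) : stackZeroId n *ᵥ x = (0 : Fin n → ℝ) ⊕ᵥ x := by
  rw [stackZeroId, fromRows_mulVec, zero_mulVec, one_mulVec]

theorem stackIdDiag_mulVec (θ x : Fin n → ℝ) : stackIdDiag θ *ᵥ x = x ⊕ᵥ (θ * x) := by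
  rw [stackIdDiag, fromRows_mulVec, one_mulVec]
  exact congrArg (Sum.elim x) (funext (mulVec_diagonal θ x))

theorem dotProduct_mulVec_sumElim_zero_nonpos
    (hP22 : (-((stackZeroId n)ᵀ * P * stackZeroId n)).PosSemidef) (v : Fin n → ℝ) :
    (0 ⊕ᵥ v) ⬝ᵥ P *ᵥ (0 ⊕ᵥ v) ≤ 0 := by
  have h := hP22.dotProduct_mulVec_nonneg v
  rwa [star_trivial, neg_mulVec, dotProduct_neg, dotProduct_transpose_mul_mul_mulVec,
    stackZeroId_mulVec, neg_nonneg] at h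

theorem dotProduct_mulVec_sumElim_mul_nonneg {θ : Fin n → ℝ}
    (hθ : ((stackIdDiag θ)ᵀ * P * stackIdDiag θ).PosSemidef) (x : Fin n → ℝ) :
    0 ≤ (x ⊕ᵥ (θ * x)) ⬝ᵥ P *ᵥ (x ⊕ᵥ (θ * x)) := by
  have h := hθ.dotProduct_mulVec_nonneg x
  rwa [star_trivial, dotProduct_transpose_mul_mul_mulVec, stackIdDiag_mulVec] at h

end StackedMatrices

theorem pointwise_quadratic_constraint_of_sector
    (n : ℕ) (hn : 1 ≤ n)
    (P : Matrix (Fin n ⊕ Fin n) (Fin n ⊕ Fin n) ℝ) (hP : P.IsSymm)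
    (hP22 : (-((stackZeroId n)ᵀ * P * stackZeroId n)).PosSemidef)
    (κ₁ κ₂ : Fin n → ℝ) (hκ : ∀ i, κ₁ i ≤ κ₂ i)
    (hvert : ∀ θ : Fin n → ℝ, (∀ i, θ i = κ₁ i ∨ θ i = κ₂ i) →
      ((stackIdDiag θ)ᵀ * P * stackIdDiag θ).PosSemidef)
    (φ : Fin n → ℝ → ℝ) (hφ0 : ∀ i, φ i 0 = 0)
    (hsector : ∀ i, InSector (φ i) (κ₁ i) (κ₂ i) Set.univ) :
    ∀ q : Fin n → ℝ,
      0 ≤ (Sum.elim q (fun i => φ i (q i))) ⬝ᵥ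
        P.mulVec (Sum.elim q (fun i => φ i (q i))) :=
  fun q ↦ pointwise_quadratic_constraint_of_sector_general P
    (dotProduct_mulVec_sumElim_zero_nonpos hP22)
    (fun θ hθ ↦ dotProduct_mulVec_sumElim_mul_nonneg (hvert θ hθ) q)
    (fun i hi ↦ hi ▸ hφ0 i) (fun i ↦ hsector i (q i) (Set.mem_univ _))
end

section
/- Let k be a kernel on ℝ with k(0,0) > 0, and define k₀(x, x′) = k(x, x′) − k(x, 0) k(x′, 0) / k(0,0). Let x₁, …, x_N ∈ ℝ, y ∈ ℝᴺ and λ > 0. Let μ⁰_D and k⁰_D denote the GPR posterior mean and covariance obtained with prior covariance k₀, data points x₁, …, x_N, observations y and noise level λ. On the other hand, consider the augmented data consisting of the noise-free virtual data point (0, 0) together with (x₁, y₁), …, (x_N, y_N): the augmented Gram matrix K̃ = (k(x̃ᵢ, x̃ⱼ))_{i,j=0}^N with x̃₀ = 0, x̃ₙ = xₙ, plus the noise matrix Λ = diag(0, λ, …, λ), is invertible, and the resulting posterior mean μ̃(x) = k̃(x)ᵀ (K̃ + Λ)⁻¹ ỹ (with k̃(x) = (k(x, x̃ₙ))_{n=0}^N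 and ỹ = (0, y₁, …, y_N)) and posterior covariance k̃_D(x, x′) = k(x, x′) − k̃(x)ᵀ (K̃ + Λ)⁻¹ k̃(x′) satisfy μ̃(x) = μ⁰_D(x) and k̃_D(x, x′) = k⁰_D(x, x′) for all x, x′ ∈ ℝ. That is, using the kernel k₀ has the same effect as conditioning the GP prior with covariance k on the noise-free virtual data point (0, 0). -/
open Matrix

/-- A kernel on a set `X` is a symmetric function `k : X × X → ℝ` whose Gram matrix
at any finite collection of points is positive semidefinite. -/
def IsKernel {X : Type*} (k : X → X → ℝ) : Prop :=
  (∀ x x' : X, k x x' = k x' x) ∧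
  ∀ (N : ℕ) (x : Fin N → X), (Matrix.of fun i j => k (x i) (x j)).PosSemidef

/-!
Conditioning a Gaussian process on a first batch of data and then on a second one is the same as
conditioning on both batches at once: the Schur complement of the first diagonal block of the joint
matrix `K + Λ` is the noisy Gram matrix of the posterior covariance `k₁` after the first batch, so
block elimination turns the joint posterior into the posterior with prior covariance `k₁`. For
a single noise-free observation at `0` this `k₁` is `k₀`, and observing the value `0` leaves the
prior mean equal to `0`.
-/

section SchurComplement

variable {m n R : Type*} [Fintype m] [DecidableEq m] [Fintype n] [DecidableEq n] [CommRing R]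

theorem isUnit_fromBlocks_of_isUnit_schur {A : Matrix m m R} {B : Matrix m n R} {C : Matrix n m R}
    {D : Matrix n n R} (hA : IsUnit A) (hS : IsUnit (D - C * A⁻¹ * B)) :
    IsUnit (fromBlocks A B C D) := by
  let := hA.invertible
  rwa [isUnit_fromBlocks_iff_of_invertible₁₁, invOf_eq_nonsing_inv]

theorem inv_fromBlocks_mulVec_sumElim {A : Matrix m m R} {B : Matrix m n R} {C : Matrix n m R}
    {D : Matrix n n R} (hA : IsUnit A) (hS : IsUnit (D - C * A⁻¹ * B)) (a : m → R) (b : n → R) :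
    (fromBlocks A B C D)⁻¹ *ᵥ Sum.elim a b =
      Sum.elim (A⁻¹ *ᵥ (a - B *ᵥ ((D - C * A⁻¹ * B)⁻¹ *ᵥ (b - C *ᵥ (A⁻¹ *ᵥ a)))))
        ((D - C * A⁻¹ * B)⁻¹ *ᵥ (b - C *ᵥ (A⁻¹ *ᵥ a))) := by
  set S := D - C * A⁻¹ * B
  set q := S⁻¹ *ᵥ (b - C *ᵥ (A⁻¹ *ᵥ a)) with hq
  have hM := isUnit_fromBlocks_of_isUnit_schur hA hS
  have hAq : A *ᵥ (A⁻¹ *ᵥ (a - B *ᵥ q)) = a - B *ᵥ q := by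
    rw [mulVec_mulVec, mul_nonsing_inv _ ((isUnit_iff_isUnit_det A).1 hA), one_mulVec]
  have hSq : D *ᵥ q - C *ᵥ (A⁻¹ *ᵥ (B *ᵥ q)) = b - C *ᵥ (A⁻¹ *ᵥ a) := by
    calc D *ᵥ q - C *ᵥ (A⁻¹ *ᵥ (B *ᵥ q)) = S *ᵥ q := by
          simp only [S, sub_mulVec, mulVec_mulVec, Matrix.mul_assoc]
      _ = b - C *ᵥ (A⁻¹ *ᵥ a) := by
          rw [hq, mulVec_mulVec, mul_nonsing_inv _ ((isUnit_iff_isUnit_det S).1 hS), one_mulVec]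
  have hsolve : fromBlocks A B C D *ᵥ Sum.elim (A⁻¹ *ᵥ (a - B *ᵥ q)) q = Sum.elim a b := by
    rw [fromBlocks_mulVec, Sum.elim_comp_inl, Sum.elim_comp_inr, hAq, sub_add_cancel]
    congr 1
    rw [mulVec_sub, mulVec_sub, sub_add_eq_add_sub, add_sub_assoc, hSq, add_sub_cancel]
  rw [← hsolve, mulVec_mulVec, nonsing_inv_mul _ ((isUnit_iff_isUnit_det _).1 hM), one_mulVec]

theorem sumElim_dotProduct_inv_fromBlocks_mulVec {A : Matrix m m R} {B : Matrix m n R}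
    {C : Matrix n m R} {D : Matrix n n R} (hA : IsUnit A) (hS : IsUnit (D - C * A⁻¹ * B))
    (u a : m → R) (v b : n → R) :
    Sum.elim u v ⬝ᵥ (fromBlocks A B C D)⁻¹ *ᵥ Sum.elim a b =
      u ⬝ᵥ A⁻¹ *ᵥ a +
        (v - (u ᵥ* A⁻¹) ᵥ* B) ⬝ᵥ (D - C * A⁻¹ * B)⁻¹ *ᵥ (b - C *ᵥ (A⁻¹ *ᵥ a)) := by
  rw [inv_fromBlocks_mulVec_sumElim hA hS, sumElim_dotProduct_sumElim, mulVec_sub,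
    dotProduct_sub, sub_dotProduct, ← dotProduct_mulVec, ← dotProduct_mulVec]
  ring

end SchurComplement

theorem posSemidef_fromBlocks_zero {m n R : Type*} [Finite m] [Finite n] [Ring R] [PartialOrder R]
    [StarRing R] {A : Matrix m m R} (hA : A.PosSemidef) :
    (fromBlocks A 0 0 (0 : Matrix n n R)).PosSemidef := by
  classical
  let := Fintype.ofFinite m
  have h := hA.conjTranspose_mul_mul_same (fromCols (1 : Matrix m m R) (0 : Matrix m n R))
  rw [conjTranspose_fromCols_eq_fromRows_conjTranspose, Matrix.mul_assoc, mul_fromCols,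
    fromRows_mul_fromCols] at h
  simpa using h

section Posterior

variable {X ι κ : Type*}

/-- The matrix of covariances `k (x i) (z j)` between two families of points; `kernelMatrix k x x`
is the Gram matrix of `k` at `x`. -/
def kernelMatrix (k : X → X → ℝ) (x : ι → X) (z : κ → X) : Matrix ι κ ℝ :=
  of fun i j => k (x i) (z j)

theorem kernelMatrix_transpose {k : X → X → ℝ} (hk : ∀ s t, k s t = k t s) (x : ι → X)
    (z : κ → X) : (kernelMatrix k x z)ᵀ = kernelMatrix k z x :=
  Matrix.ext fun _ _ => hk _ _

theorem kernelMatrix_sumElim (k : X → X → ℝ) (x : ι → X) (z : κ → X) :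
    kernelMatrix k (Sum.elim x z) (Sum.elim x z) =
      fromBlocks (kernelMatrix k x x) (kernelMatrix k x z)
        (kernelMatrix k z x) (kernelMatrix k z z) := by
  ext (i | i) (j | j) <;> rfl

theorem kernelMatrix_sumElim_add_fromBlocks (k : X → X → ℝ) (x : ι → X) (z : κ → X)
    (Λ : Matrix ι ι ℝ) (Λ' : Matrix κ κ ℝ) :
    kernelMatrix k (Sum.elim x z) (Sum.elim x z) + fromBlocks Λ 0 0 Λ' =
      fromBlocks (kernelMatrix k x x + Λ) (kernelMatrix k x z)
        (kernelMatrix k z x) (kernelMatrix k z z + Λ') := by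
  rw [kernelMatrix_sumElim, fromBlocks_add, add_zero, add_zero]

theorem kernelMatrix_comp_add_submatrix (k : X → X → ℝ) (x : ι → X) (Λ : Matrix ι ι ℝ)
    (f : κ → ι) :
    kernelMatrix k (x ∘ f) (x ∘ f) + Λ.submatrix f f = (kernelMatrix k x x + Λ).submatrix f f :=
  rfl

theorem IsKernel.posSemidef_kernelMatrix [Finite ι] {k : X → X → ℝ} (hk : IsKernel k)
    (x : ι → X) : (kernelMatrix k x x).PosSemidef := by
  convert (hk.2 _ (x ∘ (Finite.equivFin ι).symm)).submatrix (Finite.equivFin ι) using 1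
  ext i j
  simp [kernelMatrix]

variable [Fintype ι] [DecidableEq ι]

/-- The GPR posterior mean at `t` for the zero-mean prior with covariance `k`, given observations
`y` at the points `x`. The noise covariance `Λ` is an arbitrary matrix, so that noise-free
observations are allowed; the value is meaningful only if `kernelMatrix k x x + Λ` is invertible,
as otherwise the inverse is `0`. -/
noncomputable def gprMean (k : X → X → ℝ) (x : ι → X) (Λ : Matrix ι ι ℝ) (y : ι → ℝ) (t : X) : ℝ :=
  (k t ∘ x) ⬝ᵥ (kernelMatrix k x x + Λ)⁻¹ *ᵥ y

/-- The GPR posterior covariance for prior covariance `k` and observations at the points `x` with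
noise covariance `Λ`. -/
noncomputable def gprCov (k : X → X → ℝ) (x : ι → X) (Λ : Matrix ι ι ℝ) (s t : X) : ℝ :=
  k s t - (k s ∘ x) ⬝ᵥ (kernelMatrix k x x + Λ)⁻¹ *ᵥ (k t ∘ x)

theorem gprCov_eq_sub_gprMean (k : X → X → ℝ) (x : ι → X) (Λ : Matrix ι ι ℝ) (s t : X) :
    gprCov k x Λ s t = k s t - gprMean k x Λ (k t ∘ x) s :=
  rfl

theorem gprMean_zero (k : X → X → ℝ) (x : ι → X) (Λ : Matrix ι ι ℝ) :
    gprMean k x Λ 0 = 0 := by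
  funext t
  rw [gprMean, mulVec_zero, dotProduct_zero, Pi.zero_apply]

theorem gprMean_comp_equiv [Fintype κ] [DecidableEq κ] (k : X → X → ℝ) (e : κ ≃ ι) (x : ι → X)
    (Λ : Matrix ι ι ℝ) (y : ι → ℝ) :
    gprMean k (x ∘ e) (Λ.submatrix e e) (y ∘ e) = gprMean k x Λ y := by
  funext t
  rw [gprMean, kernelMatrix_comp_add_submatrix, inv_submatrix_equiv,
    submatrix_mulVec_equiv, Function.comp_assoc, Equiv.self_comp_symm, Function.comp_id]
  exact comp_equiv_dotProduct_comp_equiv (k t ∘ x) _ e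

theorem gprCov_comp_equiv [Fintype κ] [DecidableEq κ] (k : X → X → ℝ) (e : κ ≃ ι) (x : ι → X)
    (Λ : Matrix ι ι ℝ) :
    gprCov k (x ∘ e) (Λ.submatrix e e) = gprCov k x Λ := by
  funext s t
  simp only [gprCov_eq_sub_gprMean, ← gprMean_comp_equiv k e x Λ]
  rfl

theorem gprCov_unique_zero [Unique ι] (k : X → X → ℝ) (o s t : X) :
    gprCov k (fun _ : ι => o) 0 s t = k s t - k s o * k t o / k o o := by
  simp [gprCov, kernelMatrix, inv_subsingleton, dotProduct, mulVec_diagonal, div_eq_mul_inv,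
    mul_assoc, mul_comm (k o o)⁻¹]

section Symmetric

variable {k : X → X → ℝ} (hk : ∀ s t, k s t = k t s) {x : ι → X}
include hk

theorem kernelMatrix_sub_mul_inv_mul {κ' : Type*} (Λ : Matrix ι ι ℝ) (w : κ' → X) (z : κ → X) :
    kernelMatrix k w z - kernelMatrix k w x * (kernelMatrix k x x + Λ)⁻¹ * kernelMatrix k x z =
      kernelMatrix (gprCov k x Λ) w z := by
  ext i j
  rw [Matrix.mul_assoc, ← kernelMatrix_transpose hk z x]
  rfl

theorem gprCov_comm {Λ : Matrix ι ι ℝ} (hΛ : Λ.IsSymm) (s t : X) :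
    gprCov k x Λ s t = gprCov k x Λ t s := by
  have hinv : ((kernelMatrix k x x + Λ)⁻¹)ᵀ = (kernelMatrix k x x + Λ)⁻¹ := by
    rw [transpose_nonsing_inv, transpose_add, kernelMatrix_transpose hk, hΛ.eq]
  rw [gprCov, gprCov, hk s t, dotProduct_comm, ← vecMul_transpose, hinv, ← dotProduct_mulVec]

variable [Fintype κ] [DecidableEq κ] {Λ : Matrix ι ι ℝ} (hA : IsUnit (kernelMatrix k x x + Λ))
  {z : κ → X} {Λ' : Matrix κ κ ℝ} (hS : IsUnit (kernelMatrix (gprCov k x Λ) z z + Λ'))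
include hA hS

theorem isUnit_kernelMatrix_sumElim_add_fromBlocks :
    IsUnit (kernelMatrix k (Sum.elim x z) (Sum.elim x z) + fromBlocks Λ 0 0 Λ') := by
  rw [kernelMatrix_sumElim_add_fromBlocks]
  apply isUnit_fromBlocks_of_isUnit_schur hA
  rwa [add_sub_right_comm, kernelMatrix_sub_mul_inv_mul hk]

theorem gprMean_sumElim (y : ι → ℝ) (y' : κ → ℝ) (t : X) :
    gprMean k (Sum.elim x z) (fromBlocks Λ 0 0 Λ') (Sum.elim y y') t =
      gprMean k x Λ y t + gprMean (gprCov k x Λ) z Λ' (y' - gprMean k x Λ y ∘ z) t := by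
  have hschur : kernelMatrix k z z + Λ' -
      kernelMatrix k z x * (kernelMatrix k x x + Λ)⁻¹ * kernelMatrix k x z =
        kernelMatrix (gprCov k x Λ) z z + Λ' := by
    rw [add_sub_right_comm, kernelMatrix_sub_mul_inv_mul hk]
  have hrow : k t ∘ z - ((k t ∘ x) ᵥ* (kernelMatrix k x x + Λ)⁻¹) ᵥ* kernelMatrix k x z =
      gprCov k x Λ t ∘ z := by
    rw [← kernelMatrix_transpose hk z x, vecMul_transpose]
    funext j
    rw [Function.comp_apply, gprCov, dotProduct_mulVec, dotProduct_comm]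
    rfl
  rw [gprMean, Sum.comp_elim, kernelMatrix_sumElim_add_fromBlocks,
    sumElim_dotProduct_inv_fromBlocks_mulVec hA (hschur ▸ hS), hschur, hrow]
  rfl

theorem gprCov_sumElim (hΛ : Λ.IsSymm) (s t : X) :
    gprCov k (Sum.elim x z) (fromBlocks Λ 0 0 Λ') s t = gprCov (gprCov k x Λ) z Λ' s t := by
  have hresidual : k t ∘ z - gprMean k x Λ (k t ∘ x) ∘ z = gprCov k x Λ t ∘ z := by
    funext j
    simp only [Pi.sub_apply, Function.comp_apply]
    rw [gprCov_comm hk hΛ, gprCov_eq_sub_gprMean, hk (z j) t]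
  rw [gprCov_eq_sub_gprMean, Sum.comp_elim, gprMean_sumElim hk hA hS, hresidual,
    ← sub_sub, ← gprCov_eq_sub_gprMean, ← gprCov_eq_sub_gprMean]

end Symmetric

theorem IsKernel.gprCov {k : X → X → ℝ} (hk : IsKernel k) {x : ι → X} {Λ : Matrix ι ι ℝ}
    (hΛ : Λ.PosSemidef) (hA : IsUnit (kernelMatrix k x x + Λ)) : IsKernel (gprCov k x Λ) := by
  refine ⟨gprCov_comm hk.1 (isHermitian_iff_isSymm.1 hΛ.1), fun N z => ?_⟩
  have hposDef : (kernelMatrix k x x + Λ).PosDef :=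
    ((hk.posSemidef_kernelMatrix x).add hΛ).posDef_iff_isUnit.2 hA
  have hjoint := (hk.posSemidef_kernelMatrix (Sum.elim x z)).add (posSemidef_fromBlocks_zero hΛ)
  let := hA.invertible
  rw [kernelMatrix_sumElim_add_fromBlocks, add_zero, ← kernelMatrix_transpose hk.1 x z,
    ← conjTranspose_eq_transpose_of_trivial, hposDef.fromBlocks₁₁,
    conjTranspose_eq_transpose_of_trivial, kernelMatrix_transpose hk.1,
    kernelMatrix_sub_mul_inv_mul hk.1] at hjoint
  exact hjoint

end Posterior

section FinCons

/-- The bijection `Unit ⊕ Fin n ≃ Fin (n + 1)` sending the extra point to `0` and shifting the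
others, under which `Fin.cons` corresponds to `Sum.elim`. -/
def unitSumFinEquiv (n : ℕ) : Unit ⊕ Fin n ≃ Fin (n + 1) :=
  (Equiv.sumComm _ _).trans ((Equiv.optionEquivSumPUnit _).symm.trans (finSuccEquiv n).symm)

theorem cons_comp_unitSumFinEquiv {α : Type*} {n : ℕ} (a : α) (v : Fin n → α) :
    (Fin.cons a v : Fin (n + 1) → α) ∘ unitSumFinEquiv n = Sum.elim (fun _ => a) v := by
  ext (i | i) <;> simp [unitSumFinEquiv]

theorem diagonal_cons_submatrix_unitSumFinEquiv {α : Type*} [Zero α] {n : ℕ} (a : α)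
    (v : Fin n → α) :
    (diagonal (Fin.cons a v)).submatrix (unitSumFinEquiv n) (unitSumFinEquiv n) =
      fromBlocks (diagonal fun _ => a) 0 0 (diagonal v) := by
  rw [submatrix_diagonal_equiv, cons_comp_unitSumFinEquiv, fromBlocks_diagonal]

end FinCons

theorem kernel_k0_equals_conditioning_on_virtual_datapoint_general {X : Type*} {k : X → X → ℝ}
    (hk : IsKernel k) {o : X} (ho : 0 < k o o) {k₀ : X → X → ℝ}
    (hk₀ : ∀ s t, k₀ s t = k s t - k s o * k t o / k o o) {N : ℕ} (x : Fin N → X) (y : Fin N → ℝ)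
    {σ : Fin N → ℝ} (hσ : ∀ n, 0 < σ n) :
    IsUnit (kernelMatrix k (Fin.cons o x : Fin (N + 1) → X) (Fin.cons o x : Fin (N + 1) → X) +
        diagonal (Fin.cons 0 σ)) ∧
      (∀ t, gprMean k (Fin.cons o x : Fin (N + 1) → X) (diagonal (Fin.cons 0 σ)) (Fin.cons 0 y) t =
        gprMean k₀ x (diagonal σ) y t) ∧
      ∀ s t, gprCov k (Fin.cons o x : Fin (N + 1) → X) (diagonal (Fin.cons 0 σ)) s t =
        gprCov k₀ x (diagonal σ) s t := by
  obtain rfl : k₀ = gprCov k (fun _ : Unit => o) 0 :=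
    funext₂ fun s t => (hk₀ s t).trans (gprCov_unique_zero k o s t).symm
  have hA : IsUnit (kernelMatrix k (fun _ : Unit => o) (fun _ : Unit => o) + 0) := by
    simpa [isUnit_iff_isUnit_det, kernelMatrix] using ho.ne'
  have hS : IsUnit (kernelMatrix (gprCov k (fun _ : Unit => o) 0) x x + diagonal σ) :=
    (PosDef.posSemidef_add ((hk.gprCov PosSemidef.zero hA).posSemidef_kernelMatrix x)
      (PosDef.diagonal hσ)).isUnit
  have hx := cons_comp_unitSumFinEquiv o x
  have hΛ := diagonal_cons_submatrix_unitSumFinEquiv 0 σ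
  rw [diagonal_zero] at hΛ
  refine ⟨?_, fun t => ?_, fun s t => ?_⟩
  · rw [← isUnit_submatrix_equiv (unitSumFinEquiv N) (unitSumFinEquiv N),
      ← kernelMatrix_comp_add_submatrix, hx, hΛ]
    exact isUnit_kernelMatrix_sumElim_add_fromBlocks hk.1 hA hS
  · have hprior : gprMean k (fun _ : Unit => o) 0 (fun _ => 0) = 0 := gprMean_zero k _ 0
    rw [← gprMean_comp_equiv k (unitSumFinEquiv N), hx, hΛ, cons_comp_unitSumFinEquiv,
      gprMean_sumElim hk.1 hA hS, hprior, Pi.zero_comp, sub_zero, Pi.zero_apply, zero_add]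
  · rw [← gprCov_comp_equiv k (unitSumFinEquiv N), hx, hΛ, gprCov_sumElim hk.1 hA hS isSymm_zero]

theorem kernel_k0_equals_conditioning_on_virtual_datapoint
    (k : ℝ → ℝ → ℝ) (hk : IsKernel k) (hk00 : 0 < k 0 0)
    (k₀ : ℝ → ℝ → ℝ)
    (hk₀ : ∀ x x' : ℝ, k₀ x x' = k x x' - k x 0 * k x' 0 / k 0 0)
    (N : ℕ) (x y : Fin N → ℝ) (lam : ℝ) (hlam : 0 < lam)
    -- GPR with prior covariance `k₀`, data points `x`, observations `y`, noise level `lam`: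
    (K₀ : Matrix (Fin N) (Fin N) ℝ) (hK₀ : K₀ = Matrix.of fun i j => k₀ (x i) (x j))
    (μ₀ : ℝ → ℝ)
    (hμ₀ : ∀ x' : ℝ, μ₀ x' =
      (fun n => k₀ x' (x n)) ⬝ᵥ (K₀ + lam • (1 : Matrix (Fin N) (Fin N) ℝ))⁻¹.mulVec y)
    (kpost₀ : ℝ → ℝ → ℝ)
    (hkpost₀ : ∀ x' x'' : ℝ, kpost₀ x' x'' = k₀ x' x'' -
      (fun n => k₀ x' (x n)) ⬝ᵥ
        (K₀ + lam • (1 : Matrix (Fin N) (Fin N) ℝ))⁻¹.mulVec (fun n => k₀ x'' (x n)))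
    -- GPR with prior covariance `k` and the augmented data including the
    -- noise-free virtual data point `(0, 0)`:
    (xt : Fin (N + 1) → ℝ) (hxt : xt = Fin.cons 0 x)
    (yt : Fin (N + 1) → ℝ) (hyt : yt = Fin.cons 0 y)
    (Kt : Matrix (Fin (N + 1)) (Fin (N + 1)) ℝ)
    (hKt : Kt = Matrix.of fun i j => k (xt i) (xt j))
    (Λ : Matrix (Fin (N + 1)) (Fin (N + 1)) ℝ)
    (hΛ : Λ = Matrix.diagonal (Fin.cons 0 fun _ => lam))
    (μt : ℝ → ℝ)
    (hμt : ∀ x' : ℝ, μt x' = (fun n => k x' (xt n)) ⬝ᵥ (Kt + Λ)⁻¹.mulVec yt)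
    (ktpost : ℝ → ℝ → ℝ)
    (hktpost : ∀ x' x'' : ℝ, ktpost x' x'' = k x' x'' -
      (fun n => k x' (xt n)) ⬝ᵥ (Kt + Λ)⁻¹.mulVec (fun n => k x'' (xt n))) :
    IsUnit (Kt + Λ) ∧ (∀ x' : ℝ, μt x' = μ₀ x') ∧
      ∀ x' x'' : ℝ, ktpost x' x'' = kpost₀ x' x'' := by
  subst hK₀ hxt hyt hKt hΛ
  simp only [hμt, hμ₀, hktpost, hkpost₀, smul_one_eq_diagonal]
  exact kernel_k0_equals_conditioning_on_virtual_datapoint_general hk hk00 hk₀ x y fun _ => hlam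
end
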